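/- arXiv:1211.6261 — 3 statements merged into one kernel-verified Lean document; each statement's English description precedes it below -/
import Mathlib

section
/- Let n and d be positive integers and G a subgroup of S_n acting on ℕ^n on positions. With T(i) and C(i) the numbers of tested and canonical vectors of degree i respectively, the relative error of orderly generation up to degree d satisfies (Σ_{i=0}^{d} T(i) − Σ_{i=0}^{d} C(i)) / (Σ_{i=0}^{d} C(i)) ≤ min{ n(|G| − 1)/(n + d), n − 1 }. -/
variable {n : ℕ}

/-- Action of a permutation on integer vectors, on positions: `(σ·v)_i = v_{σ⁻¹(i)}`. -/
def act (σ : Equiv.Perm (Fin n)) (v : Fin n → ℕ) : Fin n → ℕ := fun i => v (σ⁻¹ i)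

/-- `v` is canonical under `G` if it is the lexicographically greatest element of its orbit. -/
def IsCanonical (G : Subgroup (Equiv.Perm (Fin n))) (v : Fin n → ℕ) : Prop :=
  ∀ σ ∈ G, toLex (act σ v) ≤ toLex v

/-- Position of the last nonzero entry of `v` (position `0` if `v = 0`). -/
def lastNZ [NeZero n] (v : Fin n → ℕ) : Fin n :=
  if h : v = 0 then 0
  else ((Finset.univ : Finset (Fin n)).filter fun i => v i ≠ 0).max'
    (by obtain ⟨i, hi⟩ := Function.ne_iff.mp h
        exact ⟨i, Finset.mem_filter.mpr ⟨Finset.mem_univ i, hi⟩⟩)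

/-- The father of a vector: decrement its last nonzero entry (fixes the zero vector). -/
def father [NeZero n] (v : Fin n → ℕ) : Fin n → ℕ :=
  Function.update v (lastNZ v) (v (lastNZ v) - 1)

/-- The children of a vector: increment the last nonzero entry, or set a later entry to 1. -/
def children [NeZero n] (v : Fin n → ℕ) : Set (Fin n → ℕ) :=
  insert (Function.update v (lastNZ v) (v (lastNZ v) + 1))
    {w | ∃ j : Fin n, lastNZ v < j ∧ w = Function.update v j 1}

/-- A vector is tested by the orderly generation strategy if it is the root or a
child of a canonical vector. -/
def Tested [NeZero n] (G : Subgroup (Equiv.Perm (Fin n))) (v : Fin n → ℕ) : Prop :=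
  v = 0 ∨ ∃ u : Fin n → ℕ, IsCanonical G u ∧ v ∈ children u

open Finset

section Order

lemma act_mono (σ : Equiv.Perm (Fin n)) {v w : Fin n → ℕ} (h : w ≤ v) : act σ w ≤ act σ v :=
  fun i => h (σ⁻¹ i)

lemma sum_act (σ : Equiv.Perm (Fin n)) (v : Fin n → ℕ) : ∑ i, act σ v i = ∑ i, v i :=
  Equiv.sum_comp σ⁻¹ v

lemma act_mul (σ τ : Equiv.Perm (Fin n)) (v : Fin n → ℕ) : act (σ * τ) v = act σ (act τ v) := by
  funext i
  simp [act]

lemma act_one (v : Fin n → ℕ) : act 1 v = v := by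
  funext i
  simp [act]

/-- Lowering the last nonzero entry of a canonical vector leaves it canonical. -/
lemma IsCanonical.of_le {G : Subgroup (Equiv.Perm (Fin n))} {v w : Fin n → ℕ} (l : Fin n)
    (hv : IsCanonical G v) (hle : w ≤ v) (heq : ∀ i < l, w i = v i) (hzero : ∀ i, l < i → w i = 0) :
    IsCanonical G w := by
  intro σ hσ
  by_contra! hlt
  obtain ⟨q, hq, hqlt⟩ := hlt
  simp only [Pi.toLex_apply] at hq hqlt
  rcases lt_or_ge q l with hql | hql
  · have hvw : toLex v < toLex (act σ w) :=
      ⟨q, fun j hj => by simpa [heq j (hj.trans hql)] using hq j hj, by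
        simpa [heq q hql] using hqlt⟩
    exact absurd (hvw.trans_le (Pi.toLex_monotone (act_mono σ hle))) (hv σ hσ).not_gt
  · have hsum : ∑ i, w i < ∑ i, act σ w i := by
      refine sum_lt_sum (fun i _ => ?_) ⟨q, mem_univ q, hqlt⟩
      rcases lt_trichotomy i q with h | h | h
      · exact (hq i h).le
      · exact h ▸ hqlt.le
      · simp [hzero i (hql.trans_lt h)]
    exact hsum.ne' (sum_act σ w)

lemma isCanonical_zero (G : Subgroup (Equiv.Perm (Fin n))) : IsCanonical G 0 := fun _ _ => le_rfl

lemma exists_isCanonical_act (G : Subgroup (Equiv.Perm (Fin n))) (v : Fin n → ℕ) :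
    ∃ σ ∈ G, IsCanonical G (act σ v) := by
  obtain ⟨σ, hσ⟩ := Finite.exists_max fun σ : G => toLex (act σ.1 v)
  refine ⟨σ, σ.2, fun τ hτ => ?_⟩
  rw [← act_mul]
  exact hσ (⟨τ, hτ⟩ * σ)

end Order

section LastNonzero

variable [NeZero n]

lemma lastNZ_eq {v : Fin n → ℕ} {l : Fin n} (hl : v l ≠ 0) (hzero : ∀ i, l < i → v i = 0) :
    lastNZ v = l := by
  have hv : v ≠ 0 := fun h => hl (congrFun h l)
  rw [lastNZ, dif_neg hv]
  refine le_antisymm (max'_le _ _ _ fun i hi => ?_) (le_max' _ _ (by simpa using hl))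
  by_contra! h
  exact (mem_filter.mp hi).2 (hzero i h)

lemma eq_zero_of_lastNZ_lt {v : Fin n → ℕ} {i : Fin n} (hi : lastNZ v < i) : v i = 0 := by
  by_contra h
  have hv : v ≠ 0 := fun h0 => h (congrFun h0 i)
  rw [lastNZ, dif_neg hv] at hi
  exact hi.not_ge (le_max' _ _ (by simpa using h))

lemma exists_eq_add_single_of_mem_children {u v : Fin n → ℕ} (h : v ∈ children u) :
    ∃ l, v = u + Pi.single l 1 ∧ ∀ i, l < i → u i = 0 := by
  rcases h with rfl | ⟨j, hj, rfl⟩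
  · refine ⟨lastNZ u, ?_, fun i => eq_zero_of_lastNZ_lt⟩
    funext i
    by_cases h : i = lastNZ u <;> simp [h]
  · refine ⟨j, ?_, fun i hi => eq_zero_of_lastNZ_lt (hj.trans hi)⟩
    funext i
    by_cases h : i = j
    · simp [h, eq_zero_of_lastNZ_lt hj]
    · simp [h]

variable {G : Subgroup (Equiv.Perm (Fin n))}

/-- A tested noncanonical vector has a canonical father. -/
lemma Tested.exists_eq_add_single {v : Fin n → ℕ} (hv : Tested G v) (hc : ¬ IsCanonical G v) :
    ∃ u, IsCanonical G u ∧ v = u + Pi.single (lastNZ v) 1 := by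
  rcases hv with rfl | ⟨u, hu, huv⟩
  · exact absurd (isCanonical_zero G) hc
  · obtain ⟨l, rfl, hl⟩ := exists_eq_add_single_of_mem_children huv
    have hlast : lastNZ (u + Pi.single l 1) = l :=
      lastNZ_eq (by simp) fun i hi => by simp [hl i hi, hi.ne']
    exact ⟨u, hu, by rw [hlast]⟩

lemma not_isCanonical_add_single {v : Fin n → ℕ} (hc : ¬ IsCanonical G v) (a : ℕ) :
    ¬ IsCanonical G (v + Pi.single (lastNZ v) a) := fun h =>
  hc (h.of_le (lastNZ v) (by simp) (fun i hi => by simp [hi.ne])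
    fun i hi => eq_zero_of_lastNZ_lt hi)

lemma lastNZ_add_single {v : Fin n → ℕ} (hv : v (lastNZ v) ≠ 0) (a : ℕ) :
    lastNZ (v + Pi.single (lastNZ v) a) = lastNZ v :=
  lastNZ_eq (by simp [hv]) fun i hi => by simp [eq_zero_of_lastNZ_lt hi, hi.ne']

/-- No tested noncanonical vector is a proper descendant of another one along the ray
incrementing the last nonzero entry. -/
lemma le_of_add_single_eq {v w : Fin n → ℕ} {a b : ℕ}
    (hv : Tested G v) (hvc : ¬ IsCanonical G v) (hwc : ¬ IsCanonical G w)
    (hlast : lastNZ v = lastNZ w)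
    (h : v + Pi.single (lastNZ v) a = w + Pi.single (lastNZ w) b) : b ≤ a := by
  by_contra! hab
  obtain ⟨u, hu, huv⟩ := hv.exists_eq_add_single hvc
  have key : ∀ i, i ≠ lastNZ w → w i = u i := fun i hi => by
    have h1 := congrFun h i
    have h2 := congrFun huv i
    simp only [Pi.add_apply, hlast, Pi.single_eq_of_ne hi, add_zero] at h1 h2
    exact h1.symm.trans h2
  refine hwc (hu.of_le (lastNZ w) (fun i => ?_) (fun i hi => key i hi.ne)
    fun i hi => eq_zero_of_lastNZ_lt hi)
  by_cases hi : i = lastNZ w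
  · have h1 := congrFun h (lastNZ w)
    have h2 := congrFun huv (lastNZ w)
    simp only [hlast, Pi.add_apply, Pi.single_eq_same] at h1 h2
    rw [hi]
    change w (lastNZ w) ≤ u (lastNZ w)
    omega
  · exact (key i hi).le

lemma eq_of_add_single_eq {v w : Fin n → ℕ} {a b : ℕ}
    (hv : Tested G v) (hvc : ¬ IsCanonical G v) (hw : Tested G w) (hwc : ¬ IsCanonical G w)
    (h : v + Pi.single (lastNZ v) a = w + Pi.single (lastNZ w) b) : v = w := by
  have hne : ∀ {x : Fin n → ℕ}, Tested G x → ¬ IsCanonical G x → x (lastNZ x) ≠ 0 := by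
    intro x hx hxc
    obtain ⟨u, -, hu⟩ := hx.exists_eq_add_single hxc
    have h1 := congrFun hu (lastNZ x)
    simp only [Pi.add_apply, Pi.single_eq_same] at h1
    omega
  have hlast : lastNZ v = lastNZ w := by
    rw [← lastNZ_add_single (hne hv hvc) a, h, lastNZ_add_single (hne hw hwc) b]
  have hab : a = b := le_antisymm (le_of_add_single_eq hw hwc hvc hlast.symm h.symm)
    (le_of_add_single_eq hv hvc hwc hlast h)
  rw [hlast, hab] at h
  exact add_right_cancel h

end LastNonzero

section Counting

open scoped Classical

lemma card_piAntidiag_univ (n i : ℕ) :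
    #(piAntidiag (univ : Finset (Fin n)) i) = n.multichoose i := by
  rw [← map_sym_eq_piAntidiag, card_map, sym_univ, card_univ, Sym.card_sym_eq_multichoose,
    Fintype.card_fin]

lemma Nat.mul_sum_range_multichoose (n d : ℕ) [NeZero n] :
    n * ∑ i ∈ range (d + 1), n.multichoose i = (n + d) * n.multichoose d := by
  obtain ⟨k, rfl⟩ := Nat.exists_eq_succ_of_ne_zero (NeZero.ne n)
  induction d with
  | zero => simp
  | succ d ih =>
    rw [sum_range_succ, mul_add, ih]
    have h := Nat.add_one_mul_choose_eq (k + d) d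
    have h1 : (k + 1).multichoose d = (k + d).choose d := by
      rw [Nat.multichoose_eq]; congr 1; omega
    have h2 : (k + 1).multichoose (d + 1) = (k + d + 1).choose (d + 1) := by
      rw [Nat.multichoose_eq]; congr 1; omega
    rw [Nat.succ_eq_add_one, h1, h2]
    linear_combination h

/-- The vectors of degree `i` satisfying `p`. -/
noncomputable def vectorsOfDegree (p : (Fin n → ℕ) → Prop) (i : ℕ) : Finset (Fin n → ℕ) :=
  {v ∈ piAntidiag univ i | p v}

lemma mem_vectorsOfDegree {p : (Fin n → ℕ) → Prop} {i : ℕ} {v : Fin n → ℕ} :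
    v ∈ vectorsOfDegree p i ↔ p v ∧ ∑ j, v j = i := by
  simp [vectorsOfDegree, and_comm]

lemma ncard_setOf_sum_eq (p : (Fin n → ℕ) → Prop) (i : ℕ) :
    {v : Fin n → ℕ | p v ∧ ∑ j, v j = i}.ncard = #(vectorsOfDegree p i) := by
  rw [← Set.ncard_coe_finset]
  congr 1
  ext v
  simp [mem_vectorsOfDegree]

variable (G : Subgroup (Equiv.Perm (Fin n)))

lemma multichoose_le_card_mul_card_canonical (i : ℕ) :
    n.multichoose i ≤ Nat.card G * #(vectorsOfDegree (IsCanonical G) i) := by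
  rw [← card_piAntidiag_univ, Nat.card_eq_fintype_card, ← card_univ, ← card_product]
  refine (card_le_card fun v hv => ?_).trans
    (card_image_le (f := fun x : G × (Fin n → ℕ) => act x.1.1 x.2))
  obtain ⟨σ, hσ, hc⟩ := exists_isCanonical_act G v
  refine mem_image.mpr ⟨(⟨σ, hσ⟩⁻¹, act σ v), ?_, ?_⟩
  · rw [mem_product, mem_vectorsOfDegree, sum_act]
    exact ⟨mem_univ _, hc, (mem_piAntidiag.mp hv).1⟩
  · simp [← act_mul, act_one]

variable [NeZero n]

lemma card_tested_zero_le : #(vectorsOfDegree (Tested G) 0) ≤ 1 := by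
  refine (card_filter_le _ _).trans ?_
  simp

lemma card_tested_succ_le (i : ℕ) :
    #(vectorsOfDegree (Tested G) (i + 1)) ≤ n * #(vectorsOfDegree (IsCanonical G) i) := by
  have hn : n * #(vectorsOfDegree (IsCanonical G) i) =
      #((univ : Finset (Fin n)) ×ˢ vectorsOfDegree (IsCanonical G) i) := by
    simp [card_product]
  rw [hn]
  refine (card_le_card fun v hv => ?_).trans
    (card_image_le (f := fun x : Fin n × (Fin n → ℕ) => x.2 + Pi.single x.1 1))
  obtain ⟨hv | ⟨u, hu, huv⟩, hsum⟩ := mem_vectorsOfDegree.mp hv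
  · simp [hv] at hsum
  · obtain ⟨l, rfl, -⟩ := exists_eq_add_single_of_mem_children huv
    refine mem_image.mpr ⟨(l, u), ?_, rfl⟩
    rw [mem_product, mem_vectorsOfDegree]
    refine ⟨mem_univ _, hu, ?_⟩
    simpa [sum_add_distrib] using hsum

lemma card_canonical_pos (i : ℕ) : 0 < #(vectorsOfDegree (IsCanonical G) i) := by
  obtain ⟨σ, -, hc⟩ := exists_isCanonical_act G (Pi.single (0 : Fin n) i)
  exact card_pos.mpr ⟨_, mem_vectorsOfDegree.mpr ⟨hc, by simp [sum_act]⟩⟩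

lemma sum_card_tested_le (d : ℕ) :
    ∑ i ∈ range (d + 1), #(vectorsOfDegree (Tested G) i) ≤
      n * ∑ i ∈ range (d + 1), #(vectorsOfDegree (IsCanonical G) i) := by
  rw [sum_range_succ', sum_range_succ _ d, mul_add, mul_sum]
  refine add_le_add (sum_le_sum fun i _ => card_tested_succ_le G i)
    ((card_tested_zero_le G).trans ?_)
  exact Nat.mul_pos (NeZero.pos n) (card_canonical_pos G d)

/-- Up to degree `d` there are at most as many tested noncanonical vectors as noncanonical
vectors of degree exactly `d`. -/
lemma sum_card_tested_add_card_canonical_le (d : ℕ) :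
    ∑ i ∈ range (d + 1), #(vectorsOfDegree (Tested G) i) +
        #(vectorsOfDegree (IsCanonical G) d) ≤
      ∑ i ∈ range (d + 1), #(vectorsOfDegree (IsCanonical G) i) + n.multichoose d := by
  have hsplit : ∀ i, #(vectorsOfDegree (Tested G) i) ≤
      #(vectorsOfDegree (IsCanonical G) i) +
        #(vectorsOfDegree (fun v => Tested G v ∧ ¬ IsCanonical G v) i) := fun i => by
    refine (card_le_card fun v hv => ?_).trans (card_union_le _ _)
    simp only [mem_union, mem_vectorsOfDegree] at hv ⊢
    tauto
  have hinj : ∑ i ∈ range (d + 1),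
      #(vectorsOfDegree (fun v => Tested G v ∧ ¬ IsCanonical G v) i) ≤
        #(vectorsOfDegree (fun v => ¬ IsCanonical G v) d) := by
    rw [← card_sigma]
    refine card_le_card_of_injOn
      (fun x => x.2 + Pi.single (lastNZ x.2) (d - x.1)) ?_ ?_
    · rintro ⟨i, v⟩ hx
      simp only [coe_sigma, Set.mem_sigma_iff, mem_coe, mem_range, mem_vectorsOfDegree] at hx ⊢
      obtain ⟨hi, ⟨-, hc⟩, hsum⟩ := hx
      refine ⟨not_isCanonical_add_single hc _, ?_⟩
      simp only [Pi.add_apply, sum_add_distrib, hsum, sum_pi_single', mem_univ, if_true]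
      omega
    · rintro ⟨i, v⟩ hx ⟨j, w⟩ hy h
      simp only [coe_sigma, Set.mem_sigma_iff, mem_coe, mem_vectorsOfDegree] at hx hy
      obtain rfl := eq_of_add_single_eq hx.2.1.1 hx.2.1.2 hy.2.1.1 hy.2.1.2 h
      obtain rfl : i = j := hx.2.2.symm.trans hy.2.2
      rfl
  have hcompl : #(vectorsOfDegree (IsCanonical G) d) +
      #(vectorsOfDegree (fun v => ¬ IsCanonical G v) d) = n.multichoose d := by
    rw [← card_piAntidiag_univ, vectorsOfDegree, vectorsOfDegree]
    convert card_filter_add_card_filter_not (s := piAntidiag (univ : Finset (Fin n)) d)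
      (IsCanonical G)
  have hsum := sum_le_sum fun i (_ : i ∈ range (d + 1)) => hsplit i
  rw [sum_add_distrib] at hsum
  omega

end Counting

/-- The relative error of orderly generation up to degree `d` is bounded by
`min { n(|G|−1)/(n+d), n−1 }`. -/
theorem stmt9 (n d : ℕ) [NeZero n] (hd : 0 < d) (G : Subgroup (Equiv.Perm (Fin n))) :
    ((∑ i ∈ Finset.range (d + 1),
        ({v : Fin n → ℕ | Tested G v ∧ ∑ j, v j = i}.ncard : ℚ)) -
      (∑ i ∈ Finset.range (d + 1),
        ({v : Fin n → ℕ | IsCanonical G v ∧ ∑ j, v j = i}.ncard : ℚ))) /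
      (∑ i ∈ Finset.range (d + 1),
        ({v : Fin n → ℕ | IsCanonical G v ∧ ∑ j, v j = i}.ncard : ℚ)) ≤
    min ((n * ((Nat.card G : ℚ) - 1)) / (n + d)) ((n : ℚ) - 1) := by
  simp only [ncard_setOf_sum_eq]
  have hpos : 0 < ∑ i ∈ range (d + 1), #(vectorsOfDegree (IsCanonical G) i) :=
    sum_pos (fun i _ => card_canonical_pos G i) (by simp)
  have hbound := sum_card_tested_le G d
  have hexcess := sum_card_tested_add_card_canonical_le G d
  have horbit := multichoose_le_card_mul_card_canonical G d
  have horbits : ∑ i ∈ range (d + 1), n.multichoose i ≤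
      Nat.card G * ∑ i ∈ range (d + 1), #(vectorsOfDegree (IsCanonical G) i) := by
    rw [mul_sum]
    exact sum_le_sum fun i _ => multichoose_le_card_mul_card_canonical G i
  have hratio := Nat.mul_sum_range_multichoose n d
  have hcard : 1 ≤ Nat.card G := Nat.card_pos
  rw [← Nat.cast_sum, ← Nat.cast_sum]
  generalize ∑ i ∈ range (d + 1), #(vectorsOfDegree (IsCanonical G) i) = C at *
  generalize ∑ i ∈ range (d + 1), #(vectorsOfDegree (Tested G) i) = T at *
  generalize #(vectorsOfDegree (IsCanonical G) d) = c at *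
  generalize ∑ i ∈ range (d + 1), n.multichoose i = N at *
  generalize n.multichoose d = m at *
  generalize Nat.card G = g at *
  have hn : 0 < n := NeZero.pos n
  qify at *
  rw [le_min_iff, div_le_iff₀ hpos, div_le_iff₀ hpos, div_mul_eq_mul_div,
    le_div_iff₀ (by positivity)]
  refine ⟨?_, by linarith⟩
  rcases le_total (((n : ℚ) + d) * c) (n * C) with h | h
  · calc ((T : ℚ) - C) * (n + d) ≤ ((g - 1) * c) * (n + d) := by
          gcongr; linarith
      _ = (g - 1) * ((n + d) * c) := by ring
      _ ≤ (g - 1) * (n * C) := by gcongr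
      _ = n * (g - 1) * C := by ring
  · calc ((T : ℚ) - C) * (n + d) ≤ (m - c) * (n + d) := by
          gcongr ?_ * _; linarith
      _ = n * N - (n + d) * c := by rw [hratio]; ring
      _ ≤ n * (g * C) - n * C := by gcongr
      _ = n * (g - 1) * C := by ring
end

section
/- Let n be a positive integer and G any subgroup of S_n. Then there exists a primitive invariant for G: a polynomial P ∈ ℚ[x_1,…,x_n] such that {σ ∈ S_n : σ·P = P} = G. -/
open MvPolynomial

/-- Permuting the exponents of a monomial with pairwise distinct exponents determines the
permutation. -/
lemma Finsupp.mapDomain_perm_injective {α M : Type*} [AddCommMonoid M] {m : α →₀ M}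
    (hm : Function.Injective m) :
    Function.Injective fun σ : Equiv.Perm α => m.mapDomain σ := by
  intro σ τ h
  ext i
  have key := DFunLike.congr_fun h (σ i)
  simp only [Finsupp.mapDomain_apply σ.injective] at key
  rw [← τ.apply_symm_apply (σ i), Finsupp.mapDomain_apply τ.injective] at key
  exact τ.symm_apply_eq.mp (hm key).symm

/-- Every subgroup `G` of `S_n` admits a primitive invariant: a polynomial
`P ∈ ℚ[x_1,…,x_n]` whose stabilizer in `S_n`, acting by permuting the variables by
position (i.e. by `rename`), is exactly `G`. -/
theorem stmt15 (n : ℕ) (hn : 0 < n) (G : Subgroup (Equiv.Perm (Fin n))) :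
    ∃ P : MvPolynomial (Fin n) ℚ,
      {σ : Equiv.Perm (Fin n) | rename σ P = P} = (G : Set (Equiv.Perm (Fin n))) := by
  classical
  let m : Fin n →₀ ℕ := Finsupp.equivFunOnFinite.symm fun i => (i : ℕ)
  have hm : Function.Injective m := Fin.val_injective
  let P : MvPolynomial (Fin n) ℚ := ∑ g : G, monomial (m.mapDomain (g : Equiv.Perm (Fin n))) 1
  have mapDomain_eq_iff (σ τ : Equiv.Perm (Fin n)) :
      m.mapDomain σ = m.mapDomain τ ↔ σ = τ :=
    (Finsupp.mapDomain_perm_injective hm).eq_iff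
  have coeff_P (σ : Equiv.Perm (Fin n)) :
      coeff (m.mapDomain σ) P = if σ ∈ G then 1 else 0 := by
    simp only [P, coeff_sum, coeff_monomial, mapDomain_eq_iff]
    split_ifs with hσ
    · rw [Finset.sum_eq_single ⟨σ, hσ⟩] <;> simp [Subtype.ext_iff]
    · exact Finset.sum_eq_zero fun g _ => if_neg (by rintro rfl; exact hσ g.2)
  refine ⟨P, Set.ext fun σ => ⟨fun h => ?_, fun hσ => ?_⟩⟩
  · by_contra hσ
    have h_coeff := coeff_rename_mapDomain σ σ.injective P m
    have h_one := coeff_P 1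
    rw [Equiv.Perm.coe_one, Finsupp.mapDomain_id, if_pos G.one_mem] at h_one
    rw [show rename σ P = P from h, coeff_P σ, if_neg (SetLike.mem_coe.not.mp hσ), h_one] at h_coeff
    exact zero_ne_one h_coeff
  · change rename σ P = P
    simp only [P, map_sum, rename_monomial, ← Finsupp.mapDomain_comp, ← Equiv.Perm.coe_mul]
    exact Equiv.sum_comp (Equiv.mulLeft (⟨σ, hσ⟩ : G))
      fun g : G => monomial (m.mapDomain (g : Equiv.Perm (Fin n))) (1 : ℚ)
end

section
/- Let K be a field of characteristic 0, n a positive integer, and G a subgroup of S_n acting on K[x_1,…,x_n] by permuting variables by position. Then the invariant ring K[x_1,…,x_n]^G := {P : σ·P = P for all σ ∈ G} is a free module of rank n!/|G| over the ring K[x_1,…,x_n]^{S_n} of symmetric polynomials. -/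
open MvPolynomial

/-- The invariant ring `K[x_1,…,x_n]^G` of a permutation group `G ≤ S_n` acting on
polynomials by permuting variables by position (i.e. by `rename`), as a subalgebra. -/
def invariants (K : Type*) [CommRing K] (n : ℕ) (G : Subgroup (Equiv.Perm (Fin n))) :
    Subalgebra K (MvPolynomial (Fin n) K) where
  carrier := {P | ∀ σ ∈ G, rename σ P = P}
  mul_mem' {P Q} hP hQ := fun σ hσ => by
    rw [map_mul, hP σ hσ, hQ σ hσ]
  add_mem' {P Q} hP hQ := fun σ hσ => by
    rw [map_add, hP σ hσ, hQ σ hσ]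
  algebraMap_mem' c := fun σ hσ => by
    simp [MvPolynomial.algebraMap_eq]

/-- Symmetric polynomials (`S_n`-invariants) are in particular `G`-invariant. -/
theorem symm_le_invariants (K : Type*) [CommRing K] (n : ℕ)
    (G : Subgroup (Equiv.Perm (Fin n))) :
    invariants K n ⊤ ≤ invariants K n G :=
  fun _P hP σ _hσ => hP σ trivial

/-- `K[x]^G` as a module over the ring `K[x]^{S_n}` of symmetric polynomials,
the action being multiplication inside `K[x]`. -/
noncomputable instance invariantsAlgebra (K : Type*) [CommRing K] (n : ℕ)
    (G : Subgroup (Equiv.Perm (Fin n))) :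
    Algebra (invariants K n ⊤) (invariants K n G) :=
  (Subalgebra.inclusion (symm_le_invariants K n G)).toRingHom.toAlgebra

/-- If the roots (with multiplicity) of a monic polynomial over `A` generate `B` as an `A`-algebra
and the polynomial splits over `B`, then `B` is spanned over `A` by at most
`(number of roots)!` elements. -/
theorem exists_finset_span_eq_top_of_adjoin_roots {B : Type*} [CommRing B] [Nontrivial B]
    (s : Multiset B) :
    ∀ (A : Subring B) (p : Polynomial A), p.Monic →
      p.map A.subtype = (s.map fun b => Polynomial.X - Polynomial.C b).prod →
      Algebra.adjoin A {b | b ∈ s} = ⊤ →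
      ∃ T : Finset B, T.card ≤ s.card.factorial ∧ Submodule.span A (T : Set B) = ⊤ := by
  classical
  induction s using Multiset.induction with
  | empty =>
    intro A p _ _ hs
    refine ⟨{1}, by simp, ?_⟩
    have hempty : {b : B | b ∈ (0 : Multiset B)} = ∅ := by ext; simp
    rw [hempty, Algebra.adjoin_empty] at hs
    rw [Finset.coe_singleton, ← Submodule.one_eq_span, ← Algebra.toSubmodule_bot, hs,
      Algebra.top_toSubmodule]
  | cons x s ih =>
    intro A p hp hps hs
    have hroot : Polynomial.aeval x p = 0 := by
      have h : (p.map A.subtype).eval x = 0 := by simp [hps]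
      rwa [Polynomial.eval_map] at h
    have hdeg : p.natDegree = s.card + 1 := by
      rw [← hp.natDegree_map A.subtype, hps, Polynomial.natDegree_multiset_prod_X_sub_C_eq_card,
        Multiset.card_cons]
    have hspan := Submodule.span_range_natDegree_eq_adjoin hp hroot
    set A' : Subalgebra A B := Algebra.adjoin A {x} with hA'
    have hx : x ∈ A' := Algebra.self_mem_adjoin_singleton A x
    let y : A'.toSubring := ⟨x, hx⟩
    let i : A →+* A'.toSubring := algebraMap A A'
    have hi : A'.toSubring.subtype.comp i = A.subtype := rfl
    let q : Polynomial A'.toSubring := p.map i /ₘ (Polynomial.X - Polynomial.C y)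
    have hqs : q.map A'.toSubring.subtype
        = (s.map fun b => Polynomial.X - Polynomial.C b).prod := by
      rw [Polynomial.map_divByMonic _ (Polynomial.monic_X_sub_C y), Polynomial.map_map, hi, hps,
        Multiset.map_cons, Multiset.prod_cons]
      have hy : (Polynomial.X - Polynomial.C y).map A'.toSubring.subtype
          = Polynomial.X - Polynomial.C x := by
        rw [Polynomial.map_sub, Polynomial.map_X, Polynomial.map_C]; rfl
      rw [hy]
      exact Polynomial.mul_divByMonic_cancel_left _ (Polynomial.monic_X_sub_C x)
    have hq : q.Monic := by
      refine Polynomial.monic_of_injective A'.toSubring.subtype_injective ?_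
      rw [hqs]
      exact Polynomial.monic_multiset_prod_of_monic _ _ fun b _ => Polynomial.monic_X_sub_C b
    have htop : Algebra.adjoin A'.toSubring {b | b ∈ s} = ⊤ := by
      rw [eq_top_iff]
      intro b _
      have hb : b ∈ Algebra.adjoin A {b | b ∈ x ::ₘ s} := hs ▸ Algebra.mem_top
      induction hb using Algebra.adjoin_induction with
      | mem b hb =>
        rcases Multiset.mem_cons.mp hb with rfl | hb
        · exact Subalgebra.algebraMap_mem _ y
        · exact Algebra.subset_adjoin hb
      | algebraMap a => exact Subalgebra.algebraMap_mem _ (i a)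
      | add _ _ _ _ h₁ h₂ => exact add_mem (h₁ trivial) (h₂ trivial)
      | mul _ _ _ _ h₁ h₂ => exact mul_mem (h₁ trivial) (h₂ trivial)
    obtain ⟨T, hTcard, hT⟩ := ih A'.toSubring q hq hqs htop
    open scoped Pointwise in
    refine ⟨Finset.image (x ^ ·) (Finset.range p.natDegree) * T, ?_, ?_⟩
    · refine Finset.card_mul_le.trans ?_
      rw [Multiset.card_cons, Nat.factorial_succ]
      refine Nat.mul_le_mul (Finset.card_image_le.trans ?_) hTcard
      simp [hdeg]
    · rw [Finset.coe_mul, ← Submodule.span_mul_span, hspan, eq_top_iff]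
      intro b _
      have hb : b ∈ Submodule.span A'.toSubring (T : Set B) := hT ▸ Submodule.mem_top
      induction hb using Submodule.span_induction with
      | mem b hb =>
        simpa using Submodule.mul_mem_mul (show (1 : B) ∈ Subalgebra.toSubmodule A' from one_mem A')
          (Submodule.subset_span hb)
      | zero => exact zero_mem _
      | add _ _ _ _ h₁ h₂ => exact add_mem (h₁ trivial) (h₂ trivial)
      | smul a b _ h =>
        have := Submodule.mul_mem_mul (show (a : B) ∈ Subalgebra.toSubmodule A' from a.2)
          (h trivial)
        rwa [← mul_assoc, Subalgebra.isIdempotentElem_toSubmodule A'] at this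

namespace MvPolynomial

/-- The ideal of `K[x]` generated by the elements of a subalgebra with zero constant term. -/
noncomputable def positivePartIdeal {σ K : Type*} [CommRing K] (A : Subalgebra K (MvPolynomial σ K)) :
    Ideal (MvPolynomial σ K) :=
  Ideal.span {s | s ∈ A ∧ constantCoeff s = 0}

/-- Graded Nakayama lemma: homogeneous elements spanning `K[x]` over `K` modulo the ideal generated
by the positive part of a graded subalgebra `A` span `K[x]` over `A`. -/
theorem span_eq_top_of_sup_positivePartIdeal {σ K : Type*} [CommRing K]
    (A : Subalgebra K (MvPolynomial σ K))
    (hA : ∀ s ∈ A, ∀ k, homogeneousComponent k s ∈ A)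
    (B : Set (MvPolynomial σ K)) (hB : ∀ b ∈ B, ∃ k, b.IsHomogeneous k)
    (hspan : Submodule.span K B ⊔ (positivePartIdeal A).restrictScalars K = ⊤) :
    Submodule.span A B = ⊤ := by
  have key : ∀ k f, homogeneousComponent k f ∈ Submodule.span A B := by
    intro k
    induction k using Nat.strong_induction_on with
    | _ k ih =>
      intro f
      obtain ⟨g, hg, h, hh, rfl⟩ := Submodule.mem_sup.mp (hspan ▸ Submodule.mem_top (x := f))
      rw [map_add]
      refine add_mem ?_ ?_
      · clear hh
        induction hg using Submodule.span_induction with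
        | mem b hb =>
          obtain ⟨m, hm⟩ := hB b hb
          rw [homogeneousComponent_of_mem hm]
          split_ifs
          · exact Submodule.subset_span hb
          · exact zero_mem _
        | zero => simp
        | add _ _ _ _ h₁ h₂ => rw [map_add]; exact add_mem h₁ h₂
        | smul c b _ hb =>
          rw [map_smul, ← algebraMap_smul A]
          exact Submodule.smul_mem _ _ hb
      · replace hh : h ∈ positivePartIdeal A := hh
        suffices ∀ c, homogeneousComponent k (c * h) ∈ Submodule.span A B by simpa using this 1
        induction hh using Submodule.span_induction with
        | zero => simp
        | add _ _ _ _ h₁ h₂ =>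
          intro c
          rw [mul_add, map_add]
          exact add_mem (h₁ c) (h₂ c)
        | smul a b _ hb =>
          intro c
          rw [smul_eq_mul, ← mul_assoc]
          exact hb _
        | mem s hs =>
          intro c
          rw [mul_comm, ← sum_homogeneousComponent s, ← sum_homogeneousComponent c,
            Finset.sum_mul_sum, map_sum]
          refine sum_mem fun i _ => ?_
          rw [map_sum]
          refine sum_mem fun j _ => ?_
          rw [homogeneousComponent_of_mem ((homogeneousComponent_isHomogeneous i s).mul
            (homogeneousComponent_isHomogeneous j c))]
          split_ifs with hk
          · rcases Nat.eq_zero_or_pos i with rfl | hi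
            · have h0 : coeff 0 s = 0 := hs.2
              simp [h0]
            · exact Submodule.smul_mem _ (⟨_, hA s hs.1 i⟩ : A) (ih j (by omega) c)
          · exact zero_mem _
  rw [eq_top_iff]
  intro f _
  rw [← sum_homogeneousComponent f]
  exact sum_mem fun k _ => key k f

theorem span_sup_positivePartIdeal_eq_top {σ K : Type*} [CommRing K]
    (A : Subalgebra K (MvPolynomial σ K)) (T : Set (MvPolynomial σ K))
    (hT : Submodule.span A T = ⊤) :
    Submodule.span K T ⊔ (positivePartIdeal A).restrictScalars K = ⊤ := by
  rw [eq_top_iff]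
  intro f _
  have hf : f ∈ Submodule.span A T := hT ▸ Submodule.mem_top
  induction hf using Submodule.span_induction with
  | mem f hf => exact Submodule.mem_sup_left (Submodule.subset_span hf)
  | zero => exact zero_mem _
  | add _ _ _ _ h₁ h₂ => exact add_mem (h₁ trivial) (h₂ trivial)
  | smul a f _ hf =>
    have hsplit : a • f = constantCoeff (a : MvPolynomial σ K) • f
        + f * ((a : MvPolynomial σ K) - C (constantCoeff (a : MvPolynomial σ K))) := by
      rw [smul_eq_C_mul, Subalgebra.smul_def, smul_eq_mul]
      ring
    rw [hsplit]
    refine add_mem (Submodule.smul_mem _ _ (hf trivial)) (Submodule.mem_sup_right ?_)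
    exact Ideal.mul_mem_left _ _ (Ideal.subset_span
      ⟨sub_mem a.2 (Subalgebra.algebraMap_mem A _), by simp⟩)

/-- If `K[x]` is spanned by finitely many elements over a graded subalgebra `A`, then it is spanned
by at most as many elements taken from any given set of homogeneous elements spanning it
over `K`. -/
theorem exists_homogeneous_span_eq_top {σ K : Type*} [Field K]
    (A : Subalgebra K (MvPolynomial σ K))
    (hA : ∀ s ∈ A, ∀ k, homogeneousComponent k s ∈ A)
    (H : Set (MvPolynomial σ K)) (hH : ∀ b ∈ H, ∃ k, b.IsHomogeneous k)
    (hHspan : Submodule.span K H = ⊤)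
    (T : Finset (MvPolynomial σ K)) (hT : Submodule.span A (T : Set (MvPolynomial σ K)) = ⊤) :
    ∃ B : Finset (MvPolynomial σ K), (B : Set (MvPolynomial σ K)) ⊆ H ∧ B.card ≤ T.card ∧
      Submodule.span A (B : Set (MvPolynomial σ K)) = ⊤ := by
  classical
  let I : Submodule K (MvPolynomial σ K) := (positivePartIdeal A).restrictScalars K
  have hTQ : Submodule.span K ((T.image I.mkQ : Finset _) : Set (MvPolynomial σ K ⧸ I)) = ⊤ := by
    rw [Finset.coe_image, Submodule.span_image, Submodule.map_mkQ_eq_top, sup_comm]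
    exact span_sup_positivePartIdeal_eq_top A T hT
  have : Module.Finite K (MvPolynomial σ K ⧸ I) := ⟨⟨_, hTQ⟩⟩
  have hrank : Module.finrank K (MvPolynomial σ K ⧸ I) ≤ T.card := by
    rw [← finrank_top, ← hTQ]
    exact (finrank_span_finset_le_card _).trans Finset.card_image_le
  obtain ⟨B, hBH, -, hspan, hli⟩ :=
    exists_linearIndepOn_extension (linearIndepOn_empty K I.mkQ) (Set.empty_subset H)
  have hBfin : B.Finite := LinearIndependent.finite hli
  lift B to Finset (MvPolynomial σ K) using hBfin
  refine ⟨B, hBH, ?_, ?_⟩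
  · have hcard := LinearIndependent.fintype_card_le_finrank hli
    simp only [Finset.coe_sort_coe, Fintype.card_coe] at hcard
    exact hcard.trans hrank
  · refine span_eq_top_of_sup_positivePartIdeal A hA B (fun b hb => hH b (hBH hb)) ?_
    rw [sup_comm, ← Submodule.map_mkQ_eq_top, ← Submodule.span_image, eq_top_iff,
      ← (Submodule.map_mkQ_eq_top I (Submodule.span K H)).mpr (by rw [hHspan, sup_top_eq]),
      ← Submodule.span_image]
    exact Submodule.span_le.mpr hspan

end MvPolynomial

section PermutationAction

open Equiv

/-- Permutations of the variables act on polynomials by ring automorphisms. -/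
noncomputable abbrev permMulSemiringAction (σ R : Type*) [CommRing R] :
    MulSemiringAction (Perm σ) (MvPolynomial σ R) where
  smul g P := rename g P
  one_smul P := rename_id_apply P
  mul_smul g h P := (rename_rename h g P).symm
  smul_zero g := map_zero (rename g)
  smul_add g := map_add (rename g)
  smul_one g := map_one (rename g)
  smul_mul g := map_mul (rename g)

attribute [local instance] permMulSemiringAction

theorem isGaloisGroup_invariants (K : Type*) [Field K] (n : ℕ) (G : Subgroup (Perm (Fin n))) :
    IsGaloisGroup G (invariants K n G) (MvPolynomial (Fin n) K) where
  faithful := ⟨fun {g h} hgh => by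
    ext i
    have hi : (X (g.1 i) : MvPolynomial (Fin n) K) = X (h.1 i) := by
      simpa only [rename_X] using
        (show rename g.1 (X i : MvPolynomial (Fin n) K) = rename h.1 (X i) from hgh (X i))
    rw [X_injective hi]⟩
  commutes := ⟨fun g a P => by
    change rename g.1 ((a : MvPolynomial (Fin n) K) * P) = a * rename g.1 P
    rw [map_mul, a.2 g.1 g.2]⟩
  isInvariant := ⟨fun P hP => ⟨⟨P, fun σ hσ => hP ⟨σ, hσ⟩⟩, rfl⟩⟩

/-- `K[x]` has rank `|G|` over `K[x]^G`. -/
theorem finrank_invariants (K : Type*) [Field K] (n : ℕ) (G : Subgroup (Perm (Fin n))) :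
    Module.finrank (invariants K n G) (MvPolynomial (Fin n) K) = Nat.card G := by
  have := isGaloisGroup_invariants K n G
  exact (IsGaloisGroup.card_eq_finrank' G (invariants K n G) (MvPolynomial (Fin n) K)).symm

end PermutationAction

theorem homogeneousComponent_mem_invariants {K : Type*} [CommRing K] {n : ℕ}
    {G : Subgroup (Equiv.Perm (Fin n))} {P : MvPolynomial (Fin n) K} (hP : P ∈ invariants K n G)
    (k : ℕ) : homogeneousComponent k P ∈ invariants K n G := fun σ hσ => by
  rw [rename_homogeneousComponent, hP σ hσ]

/-- `K[x]` is spanned over the symmetric polynomials by at most `n!` elements. -/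
theorem exists_finset_span_symmetric_eq_top (K : Type*) [Field K] (n : ℕ) :
    ∃ T : Finset (MvPolynomial (Fin n) K), T.card ≤ n.factorial ∧
      Submodule.span (invariants K n ⊤) (T : Set (MvPolynomial (Fin n) K)) = ⊤ := by
  let s : Multiset (MvPolynomial (Fin n) K) := Finset.univ.val.map X
  let A : Subring (MvPolynomial (Fin n) K) := (invariants K n ⊤).toSubring
  let P : Polynomial (MvPolynomial (Fin n) K) := ∏ i, (Polynomial.X - Polynomial.C (X i))
  have hP : P.Monic := Polynomial.monic_prod_of_monic _ _ fun i _ => Polynomial.monic_X_sub_C _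
  have hPs : P = (s.map fun b => Polynomial.X - Polynomial.C b).prod := by
    simp only [s, P, Finset.prod, Multiset.map_map, Function.comp_def]
  have hlifts : P ∈ Polynomial.lifts A.subtype := by
    rw [Polynomial.lifts_iff_coeff_lifts]
    intro k
    refine ⟨⟨P.coeff k, fun σ _ => ?_⟩, rfl⟩
    have hmap : P.map (rename σ : MvPolynomial (Fin n) K →ₐ[K] _).toRingHom = P := by
      simp only [P, Polynomial.map_prod, Polynomial.map_sub, Polynomial.map_X, Polynomial.map_C]
      simpa using Equiv.prod_comp σ
        fun i => (Polynomial.X - Polynomial.C (X i : MvPolynomial (Fin n) K))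
    conv_rhs => rw [← hmap, Polynomial.coeff_map]
    rfl
  obtain ⟨p, hp, -, hpm⟩ := Polynomial.lifts_and_natDegree_eq_and_monic hlifts hP
  have hadjoin : Algebra.adjoin A {b | b ∈ s} = ⊤ := by
    rw [eq_top_iff]
    intro f _
    induction f using MvPolynomial.induction_on with
    | C a => exact Subalgebra.algebraMap_mem _ (algebraMap K (invariants K n ⊤) a)
    | add _ _ h₁ h₂ => exact add_mem (h₁ trivial) (h₂ trivial)
    | mul_X _ i h => exact mul_mem (h trivial) (Algebra.subset_adjoin (by simp [s]))
  obtain ⟨T, hT, hspan⟩ :=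
    exists_finset_span_eq_top_of_adjoin_roots s A p hpm (hp.trans hPs) hadjoin
  exact ⟨T, by simpa [s] using hT, hspan⟩

open scoped Classical in
/-- The Reynolds operator, averaging a polynomial over `G`. -/
noncomputable def reynolds (K : Type*) [Field K] (n : ℕ) (G : Subgroup (Equiv.Perm (Fin n))) :
    MvPolynomial (Fin n) K →ₗ[invariants K n ⊤] MvPolynomial (Fin n) K where
  toFun P := C (Nat.card G : K)⁻¹ * ∑ g : G, rename g P
  map_add' P Q := by
    simp only [map_add, Finset.sum_add_distrib, mul_add]
  map_smul' s P := by
    have hs : ∀ g : G, rename g (s • P) = (s : MvPolynomial (Fin n) K) * rename g P := fun g => by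
      rw [Subalgebra.smul_def, smul_eq_mul, map_mul, s.2 g trivial]
    rw [Finset.sum_congr rfl fun g _ => hs g, ← Finset.mul_sum, mul_left_comm]
    rfl

section Reynolds

variable {K : Type*} [Field K] {n : ℕ} {G : Subgroup (Equiv.Perm (Fin n))}

open scoped Classical in
theorem reynolds_apply (P : MvPolynomial (Fin n) K) :
    reynolds K n G P = C (Nat.card G : K)⁻¹ * ∑ g : G, rename g P := rfl

theorem reynolds_mem_invariants (P : MvPolynomial (Fin n) K) :
    reynolds K n G P ∈ invariants K n G := by
  classical
  intro σ hσ
  have hsum : ∑ g : G, rename σ (rename g P) = ∑ g : G, rename g P :=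
    Fintype.sum_equiv (Equiv.mulLeft (⟨σ, hσ⟩ : G)) _ _ fun g => by
      rw [rename_rename]
      rfl
  rw [reynolds_apply, map_mul, rename_C, map_sum, hsum]

theorem reynolds_eq_self [CharZero K] {P : MvPolynomial (Fin n) K} (hP : P ∈ invariants K n G) :
    reynolds K n G P = P := by
  classical
  have hG : (Nat.card G : K) ≠ 0 := Nat.cast_ne_zero.mpr Nat.card_pos.ne'
  rw [reynolds_apply, Finset.sum_congr rfl fun (g : G) _ => hP g g.2, Finset.sum_const,
    Finset.card_univ, ← Nat.card_eq_fintype_card, nsmul_eq_mul, ← mul_assoc, ← C_eq_coe_nat,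
    ← C_mul, inv_mul_cancel₀ hG, C_1, one_mul]

theorem homogeneousComponent_reynolds (k : ℕ) (P : MvPolynomial (Fin n) K) :
    homogeneousComponent k (reynolds K n G P) = reynolds K n G (homogeneousComponent k P) := by
  classical
  rw [reynolds_apply, reynolds_apply, homogeneousComponent_C_mul, map_sum]
  simp only [rename_homogeneousComponent]

end Reynolds

/-- `K[x]` has a finite basis over the symmetric polynomials each of whose members is either
`G`-invariant or killed by the Reynolds operator. -/
theorem exists_basis_adapted_to_reynolds (K : Type*) [Field K] [CharZero K] (n : ℕ)
    (G : Subgroup (Equiv.Perm (Fin n))) :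
    ∃ B : Finset (MvPolynomial (Fin n) K),
      (∀ b ∈ B, b ∈ invariants K n G ∨ reynolds K n G b = 0) ∧
      LinearIndependent (invariants K n ⊤) ((↑) : B → MvPolynomial (Fin n) K) ∧
      Submodule.span (invariants K n ⊤) (B : Set (MvPolynomial (Fin n) K)) = ⊤ := by
  obtain ⟨T, hTcard, hT⟩ := exists_finset_span_symmetric_eq_top K n
  let H : Set (MvPolynomial (Fin n) K) :=
    {P | (∃ k, P.IsHomogeneous k) ∧ (P ∈ invariants K n G ∨ reynolds K n G P = 0)}
  have hH : Submodule.span K H = ⊤ := by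
    rw [eq_top_iff]
    intro P _
    rw [← sum_homogeneousComponent P]
    refine sum_mem fun k _ => ?_
    rw [← add_sub_cancel (reynolds K n G (homogeneousComponent k P)) (homogeneousComponent k P)]
    have hk : (reynolds K n G (homogeneousComponent k P)).IsHomogeneous k := by
      rw [← homogeneousComponent_reynolds]
      exact homogeneousComponent_isHomogeneous k _
    refine add_mem (Submodule.subset_span ⟨⟨k, hk⟩, .inl (reynolds_mem_invariants _)⟩)
      (Submodule.subset_span
        ⟨⟨k, (homogeneousComponent_isHomogeneous k P).sub hk⟩, .inr ?_⟩)
    rw [map_sub, reynolds_eq_self (reynolds_mem_invariants _), sub_self]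
  obtain ⟨B, hBH, hBcard, hB⟩ := exists_homogeneous_span_eq_top (invariants K n ⊤)
    (fun s hs k => homogeneousComponent_mem_invariants hs k) H (fun _ h => h.1) hH T hT
  refine ⟨B, fun b hb => (hBH hb).2, ?_, hB⟩
  refine linearIndependent_of_top_le_span_of_card_le_finrank ?_ ?_
  · rw [Subtype.range_coe_subtype]
    exact hB.ge
  · rw [finrank_invariants, Fintype.card_coe]
    refine (hBcard.trans hTcard).trans_eq ?_
    rw [Nat.card_congr Subgroup.topEquiv.toEquiv, Nat.card_perm, Nat.card_fin]

instance (K : Type*) [CommRing K] (n : ℕ) (G : Subgroup (Equiv.Perm (Fin n))) :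
    IsScalarTower (invariants K n ⊤) (invariants K n G) (MvPolynomial (Fin n) K) :=
  .of_algebraMap_eq fun _ => rfl

theorem free_and_finite_invariants (K : Type*) [Field K] [CharZero K] (n : ℕ)
    (G : Subgroup (Equiv.Perm (Fin n))) :
    Module.Free (invariants K n ⊤) (invariants K n G) ∧
      Module.Finite (invariants K n ⊤) (invariants K n G) := by
  obtain ⟨B, hB, hli, hspan⟩ := exists_basis_adapted_to_reynolds K n G
  let ι : invariants K n G →ₗ[invariants K n ⊤] MvPolynomial (Fin n) K :=
    (IsScalarTower.toAlgHom (invariants K n ⊤) (invariants K n G)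
      (MvPolynomial (Fin n) K)).toLinearMap
  have hι : Function.Injective ι := Subtype.val_injective
  let v : {b : B // (b : MvPolynomial (Fin n) K) ∈ invariants K n G} → invariants K n G :=
    fun b => ⟨b.1, b.2⟩
  have hv : LinearIndependent (invariants K n ⊤) v :=
    .of_comp ι (hli.comp Subtype.val Subtype.val_injective)
  have key : ∀ P : MvPolynomial (Fin n) K,
      reynolds K n G P ∈ (Submodule.span (invariants K n ⊤) (Set.range v)).map ι := by
    intro P
    have hP : P ∈ Submodule.span (invariants K n ⊤) (B : Set (MvPolynomial (Fin n) K)) :=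
      hspan ▸ Submodule.mem_top
    induction hP using Submodule.span_induction with
    | mem b hb =>
      rcases hB b hb with h | h
      · rw [reynolds_eq_self h]
        exact ⟨⟨b, h⟩, Submodule.subset_span ⟨⟨⟨b, hb⟩, h⟩, rfl⟩, rfl⟩
      · rw [h]
        exact zero_mem _
    | zero => rw [map_zero]; exact zero_mem _
    | add _ _ _ _ h₁ h₂ => rw [map_add]; exact add_mem h₁ h₂
    | smul a _ _ h => rw [map_smul]; exact Submodule.smul_mem _ a h
  have htop : ⊤ ≤ Submodule.span (invariants K n ⊤) (Set.range v) := by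
    intro f _
    obtain ⟨z, hz, hzf⟩ := key f
    rw [reynolds_eq_self f.2] at hzf
    exact hι hzf ▸ hz
  let b := Module.Basis.mk hv htop
  exact ⟨.of_basis b, .of_basis b⟩

set_option synthInstance.maxHeartbeats 800000 in
/-- For `K` a field of characteristic `0`, the invariant ring `K[x_1,…,x_n]^G` is a
free module of rank `n!/|G|` over the symmetric polynomials `K[x_1,…,x_n]^{S_n}`. -/
theorem stmt17 (K : Type*) [Field K] [CharZero K] (n : ℕ) (hn : 0 < n)
    (G : Subgroup (Equiv.Perm (Fin n))) :
    Module.Free (invariants K n ⊤) (invariants K n G) ∧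
    Module.rank (invariants K n ⊤) (invariants K n G) =
      (Nat.factorial n / Nat.card G : ℕ) := by
  obtain ⟨hfree, hfin⟩ := free_and_finite_invariants K n G
  refine ⟨hfree, ?_⟩
  rw [← Module.finrank_eq_rank, Nat.cast_inj]
  have htower := Module.finrank_mul_finrank' (R := invariants K n ⊤) (S := invariants K n G)
    (MvPolynomial (Fin n) K)
  rw [finrank_invariants, finrank_invariants, Nat.card_congr Subgroup.topEquiv.toEquiv,
    Nat.card_perm, Nat.card_fin] at htower
  rw [← htower, Nat.mul_div_cancel _ Nat.card_pos]
end
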